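/- Let μ and μ' be stable matchings such that Γ*(μ,μ') has exactly one nontrivial weakly connected component. Then the subspace E of ℝ^A contains |A| − 1 linearly independent vectors, i.e., dim E ≥ |A| − 1. -/

import Mathlib

/-!
Write `D` for the symmetric difference of `μ` and `μ'`. For `p` acceptable outside `D` the unit
vector `e_p` lies in `E`, because one of `x_p ≥ 0` and `x_p ≤ 1` is tight at both matchings
(`eVec_mem_of_not_symmDiff`). Hence a valid 0/1 inequality whose support `T` meets `μ` exactly in
`a ∉ μ'` and `μ'` exactly in `a' ∉ μ` gives `e_a + e_a' ∈ E` (`pair_mem`). Two kinds of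
inequalities are used.

* The degree constraints of a man or a woman link any two elements of `D` sharing a person
  (`row_link`, `col_link`).
* The stability constraint at a vertex `p = (m, w)` of `Γ*` outside `μ ∪ μ'` is tight at both
  matchings: if `μ(m) < w ≤ μ'(m)`, then stability of `μ` and `between_w` force
  `μ'(w) < m ≤ μ(w)`. It links the `μ`-edge at `w` with the `μ'`-edge at `m`, or the other way
  round (`exists_link`).

So for each vertex of `Γ*` all elements of `D` meeting it are linked (`star_link`). Adjacent
vertices of `Γ*` share a person with different partners in `μ` and `μ'`, hence share an element of
`D` that meets both, and linking propagates along paths of `Γ*`. Every element of `D` lies in a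
nontrivial component of `Γ*`, so when there is only one, all of `D` is linked to a single
`b ∈ D`. Then `E` and `e_b` together span `ℝ^A`.
-/

open scoped Classical

/-- An instance of the stable marriage problem with ties: men `M`, women `W`,
acceptable pairs `Acc`, and for each man (resp. woman) a total preorder on the
acceptable partners. `mle m w w'` means `w ≤_m w'`, `wle w m m'` means `m ≤_w m'`. -/
structure SMTI (M W : Type*) where
  Acc : Set (M × W)
  mle : M → W → W → Prop
  wle : W → M → M → Prop
  mle_refl : ∀ m w, (m, w) ∈ Acc → mle m w w
  mle_trans : ∀ m w₁ w₂ w₃, mle m w₁ w₂ → mle m w₂ w₃ → mle m w₁ w₃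
  mle_total : ∀ m w w', (m, w) ∈ Acc → (m, w') ∈ Acc → mle m w w' ∨ mle m w' w
  mle_mem : ∀ m w w', mle m w w' → (m, w) ∈ Acc ∧ (m, w') ∈ Acc
  wle_refl : ∀ w m, (m, w) ∈ Acc → wle w m m
  wle_trans : ∀ w m₁ m₂ m₃, wle w m₁ m₂ → wle w m₂ m₃ → wle w m₁ m₃
  wle_total : ∀ w m m', (m, w) ∈ Acc → (m', w) ∈ Acc → wle w m m' ∨ wle w m' m
  wle_mem : ∀ w m m', wle w m m' → (m, w) ∈ Acc ∧ (m', w) ∈ Acc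

namespace SMTI

variable {M W : Type*} (I : SMTI M W)

/-- `≤_m` extended to `Option W`, where `none` (being single) is strictly below
every acceptable partner. -/
def mleO (m : M) : Option W → Option W → Prop
  | none, none => True
  | none, some w => (m, w) ∈ I.Acc
  | some _, none => False
  | some w, some w' => I.mle m w w'

/-- `≤_w` extended to `Option M`. -/
def wleO (w : W) : Option M → Option M → Prop
  | none, none => True
  | none, some m => (m, w) ∈ I.Acc
  | some _, none => False
  | some m, some m' => I.wle w m m'

/-- strict version of `mleO` -/
def mltO (m : M) (a b : Option W) : Prop := I.mleO m a b ∧ ¬ I.mleO m b a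

/-- strict version of `wleO` -/
def wltO (w : W) (a b : Option M) : Prop := I.wleO w a b ∧ ¬ I.wleO w b a

/-- A matching: a set of acceptable pairs in which every man and every woman
occurs at most once. -/
def IsMatching (μ : Set (M × W)) : Prop :=
  μ ⊆ I.Acc ∧ (∀ m w w', (m, w) ∈ μ → (m, w') ∈ μ → w = w') ∧
    (∀ m m' w, (m, w) ∈ μ → (m', w) ∈ μ → m = m')

/-- the partner `μ(m)` of a man `m` (`none` if `m` is single) -/
noncomputable def mpartner (μ : Set (M × W)) (m : M) : Option W :=
  if h : ∃ w, (m, w) ∈ μ then some h.choose else none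

/-- the partner `μ(w)` of a woman `w` (`none` if `w` is single) -/
noncomputable def wpartner (μ : Set (M × W)) (w : W) : Option M :=
  if h : ∃ m, (m, w) ∈ μ then some h.choose else none

/-- A stable matching: no acceptable pair is blocking. -/
def IsStable (μ : Set (M × W)) : Prop :=
  I.IsMatching μ ∧ ∀ p ∈ I.Acc,
    I.mleO p.1 (some p.2) (mpartner μ p.1) ∨ I.wleO p.2 (some p.1) (wpartner μ p.2)

/-- `between_m(a, b, c)` -/
def betweenM (m : M) (a b c : Option W) : Prop :=
  a = b ∨ a = c ∨ (I.mltO m b a ∧ I.mleO m a c) ∨ (I.mltO m c a ∧ I.mleO m a b)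

/-- `between_w(a, b, c)` -/
def betweenW (w : W) (a b c : Option M) : Prop :=
  a = b ∨ a = c ∨ (I.wltO w b a ∧ I.wleO w a c) ∨ (I.wltO w c a ∧ I.wleO w a b)

/-- the (directed) edge relation of the marriage graph `Γ` -/
def gammaEdge (p q : M × W) : Prop :=
  p ∈ I.Acc ∧ q ∈ I.Acc ∧
    ((p.1 = q.1 ∧ p.2 ≠ q.2 ∧ I.mle p.1 p.2 q.2) ∨
      (p.2 = q.2 ∧ p.1 ≠ q.1 ∧ I.wle p.2 p.1 q.1))

/-- the vertex set of `Γ*(μ, μ')` -/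
noncomputable def starV (μ μ' : Set (M × W)) : Set (M × W) :=
  {p | p ∈ I.Acc ∧
    I.betweenM p.1 (some p.2) (mpartner μ p.1) (mpartner μ' p.1) ∧
    I.betweenW p.2 (some p.1) (wpartner μ p.2) (wpartner μ' p.2)}

/-- undirected adjacency inside the subgraph of `Γ` induced by the vertex set `S` -/
def adjIn (S : Set (M × W)) (p q : M × W) : Prop :=
  p ∈ S ∧ q ∈ S ∧ (I.gammaEdge p q ∨ I.gammaEdge q p)

/-- `p` and `q` lie in the same weakly connected component of the subgraph of `Γ`
induced by `S` -/
def connIn (S : Set (M × W)) (p q : M × W) : Prop :=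
  p ∈ S ∧ q ∈ S ∧ Relation.ReflTransGen (I.adjIn S) p q

/-- `p` is an isolated vertex of the subgraph of `Γ` induced by `S` -/
def IsIsolated (S : Set (M × W)) (p : M × W) : Prop :=
  p ∈ S ∧ ∀ q, ¬ I.adjIn S p q

/-- `C` is a nontrivial weakly connected component of the subgraph of `Γ`
induced by `S` -/
def IsNontrivialComp (S : Set (M × W)) (C : Set (M × W)) : Prop :=
  (∃ v ∈ S, C = {u | I.connIn S v u}) ∧ ¬ C.Subsingleton

/-- `B` is the vertex set of a principal block (`P^m` or `P^w`) of the subgraph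
of `Γ` induced by `S` -/
def IsPrincipalBlock (S : Set (M × W)) (B : Set (M × W)) : Prop :=
  (∃ m : M, B = {p ∈ S | p.1 = m}) ∨ (∃ w : W, B = {p ∈ S | p.2 = w})

/-- characteristic vector `x_ν ∈ ℝ^A` of a set of pairs -/
noncomputable def chi (ν : Set (M × W)) : M × W → ℝ := fun p => if p ∈ ν then 1 else 0

/-- standard basis vector `e_v` -/
noncomputable def eVec (v : M × W) : M × W → ℝ := fun p => if p = v then 1 else 0

/-- dot product on `ℝ^{M × W}` -/
noncomputable def dotP [Fintype M] [Fintype W] (α x : M × W → ℝ) : ℝ := ∑ p, α p * x p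

/-- `E`: the span of all vectors `α` (supported on the acceptable pairs) for which
there is `β` so that `α · x ≥ β` is valid for all stable matchings and tight at
both `μ` and `μ'`. -/
noncomputable def Espace [Fintype M] [Fintype W] (μ μ' : Set (M × W)) :
    Submodule ℝ (M × W → ℝ) :=
  Submodule.span ℝ {α | (∀ p, p ∉ I.Acc → α p = 0) ∧ ∃ β : ℝ,
    (∀ ν, I.IsStable ν → β ≤ dotP α (chi ν)) ∧
    dotP α (chi μ) = β ∧ dotP α (chi μ') = β}

/-- `a` is linked to `b`: `E` contains `λ e_a + γ e_b` with `λ ≠ 0`. -/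
def linked [Fintype M] [Fintype W] (μ μ' : Set (M × W)) (a b : M × W) : Prop :=
  ∃ l g : ℝ, l ≠ 0 ∧ l • eVec a + g • eVec b ∈ I.Espace μ μ'

/-- `x_μ` and `x_μ'` are adjacent extreme points of `P_SMT`: they are distinct, and
whenever their midpoint is a convex combination of extreme points (characteristic
vectors of stable matchings), only `x_μ` and `x_μ'` get nonzero weight. -/
def AdjacentSM [Fintype M] [Fintype W] (μ μ' : Set (M × W)) : Prop :=
  chi μ ≠ chi μ' ∧
  ∀ (T : Finset (Set (M × W))) (c : Set (M × W) → ℝ),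
    (∀ ν ∈ T, I.IsStable ν) → (∀ ν ∈ T, 0 ≤ c ν) → (∑ ν ∈ T, c ν) = 1 →
    (∑ ν ∈ T, c ν • chi ν) = (2⁻¹ : ℝ) • (chi μ + chi μ') →
    ∀ ν ∈ T, c ν ≠ 0 → chi ν = chi μ ∨ chi ν = chi μ'

end SMTI

namespace SMTI

variable {M W : Type*} (I : SMTI M W)

/-! ### Partners in a matching -/

section Partner

lemma mpartner_eq_iff {ν : Set (M × W)} (h : I.IsMatching ν) (m : M) (w : W) :
    mpartner ν m = some w ↔ (m, w) ∈ ν := by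
  unfold mpartner
  split_ifs with hex
  · constructor
    · intro e
      have := hex.choose_spec
      simp only [Option.some.injEq] at e
      rwa [e] at this
    · intro hw
      rw [Option.some.injEq]
      exact h.2.1 m _ _ hex.choose_spec hw
  · simp only [false_iff]
    exact fun hw => hex ⟨w, hw⟩

lemma wpartner_eq_iff {ν : Set (M × W)} (h : I.IsMatching ν) (m : M) (w : W) :
    wpartner ν w = some m ↔ (m, w) ∈ ν := by
  unfold wpartner
  split_ifs with hex
  · constructor
    · intro e
      have := hex.choose_spec
      simp only [Option.some.injEq] at e
      rwa [e] at this
    · intro hw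
      rw [Option.some.injEq]
      exact h.2.2 _ _ w hex.choose_spec hw
  · simp only [false_iff]
    exact fun hw => hex ⟨m, hw⟩

lemma mleO_mpartner {ν : Set (M × W)} (h : I.IsMatching ν) {m : M} {w : W}
    (hle : I.mleO m (some w) (mpartner ν m)) : ∃ w', (m, w') ∈ ν ∧ I.mle m w w' := by
  cases hp : mpartner ν m with
  | none => rw [hp] at hle; exact hle.elim
  | some w' => rw [hp] at hle; exact ⟨w', (I.mpartner_eq_iff h m w').1 hp, hle⟩

lemma wleO_wpartner {ν : Set (M × W)} (h : I.IsMatching ν) {m : M} {w : W}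
    (hle : I.wleO w (some m) (wpartner ν w)) : ∃ m', (m', w) ∈ ν ∧ I.wle w m m' := by
  cases hp : wpartner ν w with
  | none => rw [hp] at hle; exact hle.elim
  | some m' => rw [hp] at hle; exact ⟨m', (I.wpartner_eq_iff h m' w).1 hp, hle⟩

lemma not_mle_of_mltO {ν : Set (M × W)} (h : I.IsMatching ν) {m : M} {w w' : W}
    (hlt : I.mltO m (mpartner ν m) (some w)) (hw' : (m, w') ∈ ν) : ¬ I.mle m w w' := by
  rw [(I.mpartner_eq_iff h m w').2 hw'] at hlt
  exact hlt.2

lemma not_wle_of_wltO {ν : Set (M × W)} (h : I.IsMatching ν) {m m' : M} {w : W}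
    (hlt : I.wltO w (wpartner ν w) (some m)) (hm' : (m', w) ∈ ν) : ¬ I.wle w m m' := by
  rw [(I.wpartner_eq_iff h m' w).2 hm'] at hlt
  exact hlt.2

end Partner

/-- The symmetric difference of `μ` and `μ'`, the support of `x_μ - x_μ'`. -/
def symmD (μ μ' : Set (M × W)) : Set (M × W) :=
  {p | (p ∈ μ ∧ p ∉ μ') ∨ (p ∈ μ' ∧ p ∉ μ)}

lemma symmD_comm (μ μ' : Set (M × W)) : symmD μ μ' = symmD μ' μ := by
  ext p; exact or_comm

/-! ### Tight valid inequalities -/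

section Valid

variable [Fintype M] [Fintype W]

lemma Espace_comm (μ μ' : Set (M × W)) : I.Espace μ μ' = I.Espace μ' μ := by
  unfold Espace
  congr 1
  ext α
  constructor <;> rintro ⟨h, β, h1, h2, h3⟩ <;> exact ⟨h, β, h1, h3, h2⟩

lemma dotP_eVec (p : M × W) (x : M × W → ℝ) : dotP (eVec p) x = x p := by
  simp [dotP, eVec]

lemma dotP_neg (α x : M × W → ℝ) : dotP (-α) x = -dotP α x := by
  simp [dotP]

lemma dotP_chi (T ν : Set (M × W)) : dotP (chi T) (chi ν) = ((T ∩ ν).ncard : ℝ) := by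
  have h : ∀ p, chi T p * chi ν p = if p ∈ T ∩ ν then (1 : ℝ) else 0 := by
    intro p
    by_cases h1 : p ∈ T <;> by_cases h2 : p ∈ ν <;> simp [chi, h1, h2]
  simp only [dotP, h, Finset.sum_boole]
  rw [Set.ncard_eq_toFinset_card']
  congr 2
  ext p; simp

lemma eVec_mem_of_not_symmDiff {μ μ' : Set (M × W)} {p : M × W} (hA : p ∈ I.Acc)
    (hp : p ∉ symmD μ μ') : eVec p ∈ I.Espace μ μ' := by
  have hsupp : ∀ q, q ∉ I.Acc → eVec p q = 0 := by
    intro q hq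
    have : q ≠ p := fun h => hq (h ▸ hA)
    simp [eVec, this]
  by_cases h : p ∈ μ
  · have h' : p ∈ μ' := by
      by_contra h'
      exact hp (Or.inl ⟨h, h'⟩)
    rw [← neg_neg (eVec p)]
    refine Submodule.neg_mem _ (Submodule.subset_span
      ⟨fun q hq => by simp [hsupp q hq], -1, fun ν _ => ?_, ?_, ?_⟩)
    · rw [dotP_neg, dotP_eVec]
      unfold chi; split_ifs <;> norm_num
    · simp [dotP_neg, dotP_eVec, chi, h]
    · simp [dotP_neg, dotP_eVec, chi, h']
  · have h' : p ∉ μ' := fun h' => hp (Or.inr ⟨h', h⟩)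
    refine Submodule.subset_span ⟨hsupp, 0, fun ν _ => ?_, ?_, ?_⟩
    · rw [dotP_eVec]
      unfold chi; split_ifs <;> norm_num
    · simp [dotP_eVec, chi, h]
    · simp [dotP_eVec, chi, h']

lemma mem_of_support {μ μ' : Set (M × W)} {f : M × W → ℝ}
    (hf : ∀ p, f p ≠ 0 → p ∈ I.Acc ∧ p ∉ symmD μ μ') : f ∈ I.Espace μ μ' := by
  have h : f = ∑ p, f p • eVec p := by
    ext q
    simp [eVec, Finset.sum_apply]
  rw [h]
  refine Submodule.sum_mem _ fun p _ => ?_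
  by_cases h0 : f p = 0
  · simp [h0]
  · exact Submodule.smul_mem _ _ (I.eVec_mem_of_not_symmDiff (hf p h0).1 (hf p h0).2)

/-- A 0/1 inequality with support `T`, valid in either direction with right-hand side `1` and
tight at both matchings, links the elements in which `T` meets `μ` and `μ'`. -/
lemma pair_mem {μ μ' T : Set (M × W)} {a a' : M × W} (hT : T ⊆ I.Acc)
    (hval : (∀ ν, I.IsStable ν → (T ∩ ν).Nonempty) ∨
      (∀ ν, I.IsStable ν → (T ∩ ν).Subsingleton))
    (ha : T ∩ μ = {a}) (ha' : T ∩ μ' = {a'}) (haμ' : a ∉ μ') (ha'μ : a' ∉ μ) :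
    eVec a + eVec a' ∈ I.Espace μ μ' := by
  have hsupp : ∀ q, q ∉ I.Acc → chi T q = 0 := fun q hq => by
    simp [chi, show q ∉ T from fun h => hq (hT h)]
  have hTE : chi T ∈ I.Espace μ μ' := by
    rcases hval with hval | hval
    · refine Submodule.subset_span ⟨hsupp, 1, fun ν hν => ?_, ?_, ?_⟩
      · rw [dotP_chi]
        exact_mod_cast (Set.ncard_pos (Set.toFinite _)).2 (hval ν hν)
      · simp [dotP_chi, ha]
      · simp [dotP_chi, ha']
    · rw [← neg_neg (chi T)]
      refine Submodule.neg_mem _ (Submodule.subset_span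
        ⟨fun q hq => by simp [hsupp q hq], -1, fun ν hν => ?_, ?_, ?_⟩)
      · rw [dotP_neg, dotP_chi, neg_le_neg_iff]
        exact_mod_cast Set.ncard_le_one_iff_subsingleton.2 (hval ν hν)
      · simp [dotP_neg, dotP_chi, ha]
      · simp [dotP_neg, dotP_chi, ha']
  have haT : a ∈ T ∩ μ := by rw [ha]; rfl
  have ha'T : a' ∈ T ∩ μ' := by rw [ha']; rfl
  have hne : a ≠ a' := fun h => ha'μ (h ▸ haT.2)
  have hrest : chi T - (eVec a + eVec a') ∈ I.Espace μ μ' := by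
    refine I.mem_of_support fun p hp => ?_
    by_cases hpa : p = a
    · subst hpa
      exact absurd (by simp [chi, eVec, haT.1, hne]) hp
    by_cases hpa' : p = a'
    · subst hpa'
      exact absurd (by simp [chi, eVec, ha'T.1, hne.symm]) hp
    have hpT : p ∈ T := by
      by_contra hpT
      exact hp (by simp [chi, eVec, hpT, hpa, hpa'])
    refine ⟨hT hpT, ?_⟩
    rintro (⟨h, -⟩ | ⟨h, -⟩)
    · exact hpa (by have : p ∈ T ∩ μ := ⟨hpT, h⟩; rwa [ha] at this)
    · exact hpa' (by have : p ∈ T ∩ μ' := ⟨hpT, h⟩; rwa [ha'] at this)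
  have := Submodule.sub_mem _ hTE hrest
  simpa using this

lemma row_pair {μ μ' : Set (M × W)} (hμ : I.IsMatching μ) (hμ' : I.IsMatching μ')
    {a a' : M × W} (ha : a ∈ μ) (haμ' : a ∉ μ') (ha' : a' ∈ μ') (ha'μ : a' ∉ μ)
    (h : a.1 = a'.1) : eVec a + eVec a' ∈ I.Espace μ μ' := by
  have huniq : ∀ ν, I.IsMatching ν → ∀ p ∈ ν, ∀ q ∈ ν, p.1 = q.1 → p = q := by
    rintro ν hν ⟨m, w⟩ hp ⟨m', w'⟩ hq (rfl : m = m')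
    rw [hν.2.1 m w w' hp hq]
  refine I.pair_mem (T := {p | p ∈ I.Acc ∧ p.1 = a.1}) (fun p hp => hp.1)
    (Or.inr fun ν hν p hp q hq => huniq ν hν.1 p hp.2 q hq.2 (hp.1.2.trans hq.1.2.symm))
    ?_ ?_ haμ' ha'μ
  · exact Set.eq_singleton_iff_unique_mem.2
      ⟨⟨⟨hμ.1 ha, rfl⟩, ha⟩, fun p hp => huniq μ hμ p hp.2 a ha hp.1.2⟩
  · exact Set.eq_singleton_iff_unique_mem.2
      ⟨⟨⟨hμ'.1 ha', h.symm⟩, ha'⟩, fun p hp => huniq μ' hμ' p hp.2 a' ha' (hp.1.2.trans h)⟩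

lemma col_pair {μ μ' : Set (M × W)} (hμ : I.IsMatching μ) (hμ' : I.IsMatching μ')
    {a a' : M × W} (ha : a ∈ μ) (haμ' : a ∉ μ') (ha' : a' ∈ μ') (ha'μ : a' ∉ μ)
    (h : a.2 = a'.2) : eVec a + eVec a' ∈ I.Espace μ μ' := by
  have huniq : ∀ ν, I.IsMatching ν → ∀ p ∈ ν, ∀ q ∈ ν, p.2 = q.2 → p = q := by
    rintro ν hν ⟨m, w⟩ hp ⟨m', w'⟩ hq (rfl : w = w')
    rw [hν.2.2 m m' w hp hq]
  refine I.pair_mem (T := {p | p ∈ I.Acc ∧ p.2 = a.2}) (fun p hp => hp.1)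
    (Or.inr fun ν hν p hp q hq => huniq ν hν.1 p hp.2 q hq.2 (hp.1.2.trans hq.1.2.symm))
    ?_ ?_ haμ' ha'μ
  · exact Set.eq_singleton_iff_unique_mem.2
      ⟨⟨⟨hμ.1 ha, rfl⟩, ha⟩, fun p hp => huniq μ hμ p hp.2 a ha hp.1.2⟩
  · exact Set.eq_singleton_iff_unique_mem.2
      ⟨⟨⟨hμ'.1 ha', h.symm⟩, ha'⟩, fun p hp => huniq μ' hμ' p hp.2 a' ha' (hp.1.2.trans h)⟩

/-- If `μ(m) < w ≤ μ'(m)` and `(m, w)` is a vertex of `Γ*` outside `μ`, the stability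
constraint at `(m, w)` is tight at both matchings and links the `μ`-edge at `w` with the
`μ'`-edge at `m`. -/
lemma stab_pair {μ μ' : Set (M × W)} (hμ : I.IsStable μ) (hμ' : I.IsStable μ') {m : M} {w : W}
    (hA : (m, w) ∈ I.Acc) (hp : (m, w) ∉ μ) (hp' : (m, w) ∉ μ')
    (h1 : I.mltO m (mpartner μ m) (some w)) (h2 : I.mleO m (some w) (mpartner μ' m))
    (h3 : I.betweenW w (some m) (wpartner μ w) (wpartner μ' w)) :
    ∃ m₁ w₁, (m₁, w) ∈ symmD μ μ' ∧ (m, w₁) ∈ symmD μ μ' ∧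
      eVec (m₁, w) + eVec (m, w₁) ∈ I.Espace μ μ' := by
  have h4 : I.wleO w (some m) (wpartner μ w) := (hμ.2 _ hA).resolve_left h1.2
  have h5 : I.wltO w (wpartner μ' w) (some m) := by
    rcases h3 with h | h | h | h
    · exact absurd ((I.wpartner_eq_iff hμ.1 m w).1 h.symm) hp
    · exact absurd ((I.wpartner_eq_iff hμ'.1 m w).1 h.symm) hp'
    · exact absurd h4 h.1.2
    · exact h.1
  obtain ⟨m₁, hm₁, hle₁⟩ := I.wleO_wpartner hμ.1 h4
  obtain ⟨w₁, hw₁, hle₂⟩ := I.mleO_mpartner hμ'.1 h2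
  have hm₁' : (m₁, w) ∉ μ' := fun h => I.not_wle_of_wltO hμ'.1 h5 h hle₁
  have hw₁' : (m, w₁) ∉ μ := fun h => I.not_mle_of_mltO hμ.1 h1 h hle₂
  refine ⟨m₁, w₁, Or.inl ⟨hm₁, hm₁'⟩, Or.inr ⟨hw₁, hw₁'⟩, ?_⟩
  refine I.pair_mem (T := {q | (q.1 = m ∧ I.mle m w q.2) ∨ (q.2 = w ∧ I.wle w m q.1)})
    ?_ (Or.inl fun ν hν => ?_) ?_ ?_ hm₁' hw₁'
  · rintro ⟨m₂, w₂⟩ (⟨rfl, h⟩ | ⟨rfl, h⟩)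
    · exact (I.mle_mem _ _ _ h).2
    · exact (I.wle_mem _ _ _ h).2
  · rcases hν.2 _ hA with h | h
    · obtain ⟨w₂, hw₂, hle⟩ := I.mleO_mpartner hν.1 h
      exact ⟨(m, w₂), Or.inl ⟨rfl, hle⟩, hw₂⟩
    · obtain ⟨m₂, hm₂, hle⟩ := I.wleO_wpartner hν.1 h
      exact ⟨(m₂, w), Or.inr ⟨rfl, hle⟩, hm₂⟩
  · refine Set.eq_singleton_iff_unique_mem.2 ⟨⟨Or.inr ⟨rfl, hle₁⟩, hm₁⟩, ?_⟩
    rintro ⟨m₂, w₂⟩ ⟨⟨rfl, h⟩ | ⟨rfl, h⟩, hq⟩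
    · exact absurd h (I.not_mle_of_mltO hμ.1 h1 hq)
    · rw [hμ.1.2.2 _ _ _ hq hm₁]
  · refine Set.eq_singleton_iff_unique_mem.2 ⟨⟨Or.inl ⟨rfl, hle₂⟩, hw₁⟩, ?_⟩
    rintro ⟨m₂, w₂⟩ ⟨⟨rfl, h⟩ | ⟨rfl, h⟩, hq⟩
    · rw [hμ'.1.2.1 _ _ _ hq hw₁]
    · exact absurd h (I.not_wle_of_wltO hμ'.1 h5 hq)

lemma exists_link {μ μ' : Set (M × W)} (hμ : I.IsStable μ) (hμ' : I.IsStable μ') {m : M} {w : W}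
    (hS : (m, w) ∈ I.starV μ μ') (hp : (m, w) ∉ μ) (hp' : (m, w) ∉ μ') :
    ∃ m₁ w₁, (m₁, w) ∈ symmD μ μ' ∧ (m, w₁) ∈ symmD μ μ' ∧
      eVec (m₁, w) + eVec (m, w₁) ∈ I.Espace μ μ' := by
  obtain ⟨hA, hbm, hbw⟩ := hS
  rcases hbm with h | h | h | h
  · exact absurd ((I.mpartner_eq_iff hμ.1 m w).1 h.symm) hp
  · exact absurd ((I.mpartner_eq_iff hμ'.1 m w).1 h.symm) hp'
  · exact I.stab_pair hμ hμ' hA hp hp' h.1 h.2 hbw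
  · rw [I.Espace_comm μ μ', symmD_comm μ μ']
    refine I.stab_pair hμ' hμ hA hp' hp h.1 h.2 ?_
    rcases hbw with h | h | h | h
    · exact Or.inr (Or.inl h)
    · exact Or.inl h
    · exact Or.inr (Or.inr (Or.inr h))
    · exact Or.inr (Or.inr (Or.inl h))

/-! ### Linking around a vertex of `Γ*` -/

section Link

variable {μ μ' : Set (M × W)} {F : Submodule ℝ (M × W → ℝ)}

lemma mem_of_pair (hF : I.Espace μ μ' ≤ F) {a b : M × W}
    (h : eVec a + eVec b ∈ I.Espace μ μ') : eVec a ∈ F ↔ eVec b ∈ F := by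
  have := hF h
  constructor
  · intro ha; simpa using F.sub_mem this ha
  · intro hb; simpa using F.sub_mem this hb

lemma row_link (hμ : I.IsMatching μ) (hμ' : I.IsMatching μ') (hF : I.Espace μ μ' ≤ F)
    {a b : M × W} (ha : a ∈ symmD μ μ') (hb : b ∈ symmD μ μ') (h : a.1 = b.1)
    (haF : eVec a ∈ F) : eVec b ∈ F := by
  obtain ⟨m, w⟩ := a
  obtain ⟨m', w'⟩ := b
  obtain rfl : m = m' := h
  rcases ha with ⟨h1, h2⟩ | ⟨h1, h2⟩ <;> rcases hb with ⟨h3, h4⟩ | ⟨h3, h4⟩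
  · rwa [← hμ.2.1 _ _ _ h1 h3]
  · exact (I.mem_of_pair hF (I.row_pair hμ hμ' h1 h2 h3 h4 rfl)).1 haF
  · exact (I.mem_of_pair hF (I.row_pair hμ hμ' h3 h4 h1 h2 rfl)).2 haF
  · rwa [← hμ'.2.1 _ _ _ h1 h3]

lemma col_link (hμ : I.IsMatching μ) (hμ' : I.IsMatching μ') (hF : I.Espace μ μ' ≤ F)
    {a b : M × W} (ha : a ∈ symmD μ μ') (hb : b ∈ symmD μ μ') (h : a.2 = b.2)
    (haF : eVec a ∈ F) : eVec b ∈ F := by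
  obtain ⟨m, w⟩ := a
  obtain ⟨m', w'⟩ := b
  obtain rfl : w = w' := h
  rcases ha with ⟨h1, h2⟩ | ⟨h1, h2⟩ <;> rcases hb with ⟨h3, h4⟩ | ⟨h3, h4⟩
  · rwa [← hμ.2.2 _ _ _ h1 h3]
  · exact (I.mem_of_pair hF (I.col_pair hμ hμ' h1 h2 h3 h4 rfl)).1 haF
  · exact (I.mem_of_pair hF (I.col_pair hμ hμ' h3 h4 h1 h2 rfl)).2 haF
  · rwa [← hμ'.2.2 _ _ _ h1 h3]

/-- All elements of the symmetric difference that share a person with a fixed vertex `p` of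
`Γ*` are linked to each other. -/
lemma star_link (hμ : I.IsStable μ) (hμ' : I.IsStable μ') (hF : I.Espace μ μ' ≤ F)
    {p c d : M × W} (hp : p ∈ I.starV μ μ') (hc : c ∈ symmD μ μ') (hd : d ∈ symmD μ μ')
    (hcp : c.1 = p.1 ∨ c.2 = p.2) (hdp : d.1 = p.1 ∨ d.2 = p.2)
    (hcF : eVec c ∈ F) : eVec d ∈ F := by
  have row : ∀ {a b : M × W}, a ∈ symmD μ μ' → b ∈ symmD μ μ' → a.1 = b.1 →
      eVec a ∈ F → eVec b ∈ F := fun ha hb h => I.row_link hμ.1 hμ'.1 hF ha hb h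
  have col : ∀ {a b : M × W}, a ∈ symmD μ μ' → b ∈ symmD μ μ' → a.2 = b.2 →
      eVec a ∈ F → eVec b ∈ F := fun ha hb h => I.col_link hμ.1 hμ'.1 hF ha hb h
  by_cases hpD : p ∈ symmD μ μ'
  · have hpF : eVec p ∈ F := by
      rcases hcp with h | h
      · exact row hc hpD h hcF
      · exact col hc hpD h hcF
    rcases hdp with h | h
    · exact row hpD hd h.symm hpF
    · exact col hpD hd h.symm hpF
  obtain ⟨m, w⟩ := p
  by_cases h1 : (m, w) ∈ μ
  · -- An edge of `μ ∩ μ'` meets no element of the symmetric difference.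
    have h2 : (m, w) ∈ μ' := by
      by_contra h2
      exact hpD (Or.inl ⟨h1, h2⟩)
    exfalso
    obtain ⟨m₁, w₁⟩ := c
    rcases hcp with h | h
    · obtain rfl : m₁ = m := h
      rcases hc with ⟨h3, h4⟩ | ⟨h3, h4⟩
      · exact h4 (hμ.1.2.1 _ _ _ h1 h3 ▸ h2)
      · exact h4 (hμ'.1.2.1 _ _ _ h2 h3 ▸ h1)
    · obtain rfl : w₁ = w := h
      rcases hc with ⟨h3, h4⟩ | ⟨h3, h4⟩
      · exact h4 (hμ.1.2.2 _ _ _ h1 h3 ▸ h2)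
      · exact h4 (hμ'.1.2.2 _ _ _ h2 h3 ▸ h1)
  · have h2 : (m, w) ∉ μ' := fun h2 => hpD (Or.inr ⟨h2, h1⟩)
    obtain ⟨m₁, w₁, hx, hy, hxy⟩ := I.exists_link hμ hμ' hp h1 h2
    have hiff := I.mem_of_pair hF hxy
    have hxF : eVec (m₁, w) ∈ F := by
      rcases hcp with h | h
      · exact hiff.2 (row hc hy h hcF)
      · exact col hc hx h hcF
    rcases hdp with h | h
    · exact row hy hd h.symm (hiff.1 hxF)
    · exact col hx hd h.symm hxF

end Link

end Valid

/-! ### Components of `Γ*` and the symmetric difference -/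

section Component

variable {μ μ' : Set (M × W)}

lemma symmD_subset_starV (hμ : I.IsMatching μ) (hμ' : I.IsMatching μ') :
    symmD μ μ' ⊆ I.starV μ μ' := by
  rintro ⟨m, w⟩ (⟨h, -⟩ | ⟨h, -⟩)
  · exact ⟨hμ.1 h, Or.inl ((I.mpartner_eq_iff hμ m w).2 h).symm,
      Or.inl ((I.wpartner_eq_iff hμ m w).2 h).symm⟩
  · exact ⟨hμ'.1 h, Or.inr (Or.inl ((I.mpartner_eq_iff hμ' m w).2 h).symm),
      Or.inr (Or.inl ((I.wpartner_eq_iff hμ' m w).2 h).symm)⟩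

/-- A man with two different pairs in `Γ*` has different partners in `μ` and `μ'`. -/
lemma exists_symmD_row (hμ : I.IsMatching μ) (hμ' : I.IsMatching μ') {m : M} {w w' : W}
    (hp : (m, w) ∈ I.starV μ μ') (hq : (m, w') ∈ I.starV μ μ') (hne : w ≠ w') :
    ∃ a ∈ symmD μ μ', a.1 = m := by
  by_cases heq : mpartner μ m = mpartner μ' m
  · exfalso
    have key : ∀ v, (m, v) ∈ I.starV μ μ' → some v = mpartner μ m := by
      rintro v ⟨-, h, -⟩
      rcases h with h | h | h | h
      · exact h
      · exact h.trans heq.symm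
      · exact absurd (heq ▸ h.2) h.1.2
      · exact absurd (heq ▸ h.2) h.1.2
    exact hne (Option.some.inj ((key w hp).trans (key w' hq).symm))
  · cases h1 : mpartner μ m with
    | some v =>
      refine ⟨(m, v), Or.inl ⟨(I.mpartner_eq_iff hμ m v).1 h1, fun h => ?_⟩, rfl⟩
      exact heq (h1.trans ((I.mpartner_eq_iff hμ' m v).2 h).symm)
    | none =>
      cases h2 : mpartner μ' m with
      | none => exact absurd (h1.trans h2.symm) heq
      | some v =>
        refine ⟨(m, v), Or.inr ⟨(I.mpartner_eq_iff hμ' m v).1 h2, fun h => ?_⟩, rfl⟩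
        exact heq (((I.mpartner_eq_iff hμ m v).2 h).trans h2.symm)

/-- A woman with two different pairs in `Γ*` has different partners in `μ` and `μ'`. -/
lemma exists_symmD_col (hμ : I.IsMatching μ) (hμ' : I.IsMatching μ') {m m' : M} {w : W}
    (hp : (m, w) ∈ I.starV μ μ') (hq : (m', w) ∈ I.starV μ μ') (hne : m ≠ m') :
    ∃ a ∈ symmD μ μ', a.2 = w := by
  by_cases heq : wpartner μ w = wpartner μ' w
  · exfalso
    have key : ∀ v, (v, w) ∈ I.starV μ μ' → some v = wpartner μ w := by
      rintro v ⟨-, -, h⟩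
      rcases h with h | h | h | h
      · exact h
      · exact h.trans heq.symm
      · exact absurd (heq ▸ h.2) h.1.2
      · exact absurd (heq ▸ h.2) h.1.2
    exact hne (Option.some.inj ((key m hp).trans (key m' hq).symm))
  · cases h1 : wpartner μ w with
    | some v =>
      refine ⟨(v, w), Or.inl ⟨(I.wpartner_eq_iff hμ v w).1 h1, fun h => ?_⟩, rfl⟩
      exact heq (h1.trans ((I.wpartner_eq_iff hμ' v w).2 h).symm)
    | none =>
      cases h2 : wpartner μ' w with
      | none => exact absurd (h1.trans h2.symm) heq
      | some v =>
        refine ⟨(v, w), Or.inr ⟨(I.wpartner_eq_iff hμ' v w).1 h2, fun h => ?_⟩, rfl⟩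
        exact heq (((I.wpartner_eq_iff hμ v w).2 h).trans h2.symm)

/-- Adjacent vertices of `Γ*` share a person who is covered by the symmetric difference. -/
lemma exists_symmD_of_adj (hμ : I.IsMatching μ) (hμ' : I.IsMatching μ') {p q : M × W}
    (h : I.adjIn (I.starV μ μ') p q) :
    ∃ a ∈ symmD μ μ', (a.1 = p.1 ∨ a.2 = p.2) ∧ (a.1 = q.1 ∨ a.2 = q.2) := by
  obtain ⟨hp, hq, he⟩ := h
  have hsh : (p.1 = q.1 ∧ p.2 ≠ q.2) ∨ (p.2 = q.2 ∧ p.1 ≠ q.1) := by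
    rcases he with ⟨-, -, h | h⟩ | ⟨-, -, h | h⟩
    · exact Or.inl ⟨h.1, h.2.1⟩
    · exact Or.inr ⟨h.1, h.2.1⟩
    · exact Or.inl ⟨h.1.symm, h.2.1.symm⟩
    · exact Or.inr ⟨h.1.symm, h.2.1.symm⟩
  obtain ⟨m, w⟩ := p
  obtain ⟨m', w'⟩ := q
  rcases hsh with ⟨h1, h2⟩ | ⟨h1, h2⟩
  · obtain rfl : m = m' := h1
    obtain ⟨a, ha, ham⟩ := I.exists_symmD_row hμ hμ' hp hq h2
    exact ⟨a, ha, Or.inl ham, Or.inl ham⟩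
  · obtain rfl : w = w' := h1
    obtain ⟨a, ha, haw⟩ := I.exists_symmD_col hμ hμ' hp hq h2
    exact ⟨a, ha, Or.inr haw, Or.inr haw⟩

/-- An edge of `μ` outside `μ'` has a neighbour in `Γ*`: one of its ends is matched in `μ'`,
since otherwise the edge would block `μ'`. -/
lemma exists_adj_of_diff (hμ : I.IsStable μ) (hμ' : I.IsStable μ') {p : M × W} (hp : p ∈ μ)
    (hp' : p ∉ μ') : ∃ q ∈ symmD μ μ', q ≠ p ∧ (I.gammaEdge p q ∨ I.gammaEdge q p) := by
  obtain ⟨m, w⟩ := p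
  have hA := hμ.1.1 hp
  rcases hμ'.2 _ hA with h | h
  · obtain ⟨w', hw', hle⟩ := I.mleO_mpartner hμ'.1 h
    have hne : w ≠ w' := by rintro rfl; exact hp' hw'
    refine ⟨(m, w'), Or.inr ⟨hw', fun h => hne (hμ.1.2.1 _ _ _ hp h)⟩, ?_,
      Or.inl ⟨hA, hμ'.1.1 hw', Or.inl ⟨rfl, hne, hle⟩⟩⟩
    exact fun h => hne (congrArg Prod.snd h).symm
  · obtain ⟨m', hm', hle⟩ := I.wleO_wpartner hμ'.1 h
    have hne : m ≠ m' := by rintro rfl; exact hp' hm'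
    refine ⟨(m', w), Or.inr ⟨hm', fun h => hne (hμ.1.2.2 _ _ _ hp h)⟩, ?_,
      Or.inl ⟨hA, hμ'.1.1 hm', Or.inr ⟨rfl, hne, hle⟩⟩⟩
    exact fun h => hne (congrArg Prod.fst h).symm

lemma nontrivialComp_of_symmD (hμ : I.IsStable μ) (hμ' : I.IsStable μ') {p : M × W}
    (hp : p ∈ symmD μ μ') :
    I.IsNontrivialComp (I.starV μ μ') {u | I.connIn (I.starV μ μ') p u} := by
  have hsub := I.symmD_subset_starV hμ.1 hμ'.1
  obtain ⟨q, hq, hne, he⟩ :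
      ∃ q ∈ symmD μ μ', q ≠ p ∧ (I.gammaEdge p q ∨ I.gammaEdge q p) := by
    rcases hp with ⟨h1, h2⟩ | ⟨h1, h2⟩
    · exact I.exists_adj_of_diff hμ hμ' h1 h2
    · rw [symmD_comm]
      exact I.exists_adj_of_diff hμ' hμ h1 h2
  refine ⟨⟨p, hsub hp, rfl⟩, fun hss => hne ?_⟩
  exact hss ⟨hsub hp, hsub hq, Relation.ReflTransGen.single ⟨hsub hp, hsub hq, he⟩⟩
    ⟨hsub hp, hsub hp, Relation.ReflTransGen.refl⟩

end Component

/-! ### Propagation and dimension count -/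

variable [Fintype M] [Fintype W]

/-- Linking propagates along paths of `Γ*`. -/
lemma path_link {μ μ' : Set (M × W)} {F : Submodule ℝ (M × W → ℝ)} (hμ : I.IsStable μ)
    (hμ' : I.IsStable μ') (hF : I.Espace μ μ' ≤ F) {b p : M × W} (hb : b ∈ symmD μ μ')
    (hbF : eVec b ∈ F) (h : Relation.ReflTransGen (I.adjIn (I.starV μ μ')) b p) :
    ∀ c ∈ symmD μ μ', (c.1 = p.1 ∨ c.2 = p.2) → eVec c ∈ F := by
  induction h with
  | refl =>
    intro c hc hcb
    exact I.star_link hμ hμ' hF (I.symmD_subset_starV hμ.1 hμ'.1 hb) hb hc (Or.inl rfl) hcb hbF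
  | tail _ hadj ih =>
    intro c hc hcq
    obtain ⟨a, ha, hap, haq⟩ := I.exists_symmD_of_adj hμ.1 hμ'.1 hadj
    exact I.star_link hμ hμ' hF hadj.2.1 ha hc haq hcq (ih a ha hap)

lemma linearIndependent_eVec (A : Set (M × W)) :
    LinearIndependent ℝ (fun a : A => eVec (a : M × W)) := by
  have h : (fun a : A => eVec (a : M × W)) = (Pi.basisFun ℝ (M × W)) ∘ Subtype.val := by
    funext a p
    simp [eVec, Pi.single_apply]
  rw [h]
  exact (Pi.basisFun ℝ (M × W)).linearIndependent.comp _ Subtype.val_injective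

lemma finrank_of_one_extra {μ μ' : Set (M × W)} (v : M × W → ℝ)
    (h : ∀ a ∈ I.Acc, eVec a ∈ I.Espace μ μ' ⊔ Submodule.span ℝ {v}) :
    I.Acc.ncard - 1 ≤ Module.finrank ℝ (I.Espace μ μ') := by
  have h1 : Module.finrank ℝ (Submodule.span ℝ (Set.range fun a : I.Acc => eVec (a : M × W)))
      = I.Acc.ncard := by
    rw [finrank_span_eq_card (linearIndependent_eVec I.Acc), ← Nat.card_eq_fintype_card]
    rfl
  have h2 : Submodule.span ℝ (Set.range fun a : I.Acc => eVec (a : M × W)) ≤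
      I.Espace μ μ' ⊔ Submodule.span ℝ {v} := by
    rw [Submodule.span_le]
    rintro _ ⟨a, rfl⟩
    exact h a a.2
  have h3 := Submodule.finrank_mono h2
  have h4 := Submodule.finrank_add_le_finrank_add_finrank (I.Espace μ μ') (Submodule.span ℝ {v})
  have h5 : Module.finrank ℝ (Submodule.span ℝ {v}) ≤ 1 := by
    simpa using finrank_span_le_card (R := ℝ) ({v} : Set (M × W → ℝ))
  omega

end SMTI

open SMTI in

theorem stmt10 {M W : Type*} [Fintype M] [Fintype W] (I : SMTI M W)
    (μ μ' : Set (M × W)) (hμ : I.IsStable μ) (hμ' : I.IsStable μ')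
    (hone : ∃! C, I.IsNontrivialComp (I.starV μ μ') C) :
    (∃ f : Fin (I.Acc.ncard - 1) → (M × W → ℝ),
      (∀ i, f i ∈ I.Espace μ μ') ∧ LinearIndependent ℝ f) ∧
    I.Acc.ncard - 1 ≤ Module.finrank ℝ (I.Espace μ μ') := by
  have hdim : I.Acc.ncard - 1 ≤ Module.finrank ℝ (I.Espace μ μ') := by
    by_cases hD : ∃ b, b ∈ symmD μ μ'
    · obtain ⟨b, hb⟩ := hD
      refine I.finrank_of_one_extra (eVec b) fun a ha => ?_
      have hF : I.Espace μ μ' ≤ I.Espace μ μ' ⊔ Submodule.span ℝ {eVec b} := le_sup_left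
      have hbF : eVec b ∈ I.Espace μ μ' ⊔ Submodule.span ℝ {eVec b} :=
        Submodule.mem_sup_right (Submodule.mem_span_singleton_self _)
      by_cases haD : a ∈ symmD μ μ'
      · have haS := I.symmD_subset_starV hμ.1 hμ'.1 haD
        have hC := hone.unique (I.nontrivialComp_of_symmD hμ hμ' hb)
          (I.nontrivialComp_of_symmD hμ hμ' haD)
        have hconn : a ∈ {u | I.connIn (I.starV μ μ') b u} := by
          rw [hC]
          exact ⟨haS, haS, Relation.ReflTransGen.refl⟩
        exact I.path_link hμ hμ' hF hb hbF hconn.2.2 a haD (Or.inl rfl)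
      · exact hF (I.eVec_mem_of_not_symmDiff ha haD)
    · exact I.finrank_of_one_extra 0 fun a ha =>
        Submodule.mem_sup_left (I.eVec_mem_of_not_symmDiff ha fun h => hD ⟨a, h⟩)
  refine ⟨?_, hdim⟩
  obtain ⟨f, hf⟩ := exists_linearIndependent_of_le_finrank hdim
  exact ⟨fun i => (f i : M × W → ℝ), fun i => (f i).2,
    hf.map' (I.Espace μ μ').subtype (Submodule.ker_subtype _)⟩
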